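/- Let α ∈ ℝ³ with ‖α‖ = 1, let θ ∈ ℝ with cos θ ≠ −1, and let R = I + (sin θ)α^× + (1 − cos θ)α^×α^×. Then (1/√(1 + tr(R)))·(tr(R)·I − Rᵀ + 2 e_q(R) e_q(R)ᵀ) = E_q(α, θ), where E_q(α, θ) = (1/√(2 + 2cos θ))·[(1 + cos θ)I + (sin θ)α^×]. -/

import Mathlib

/-!
With `s = √(1 + tr R)`, the unit axis gives `α^× α^× = ααᵀ - I`, so `R` has trace `1 + 2 cos θ`
(whence `s² = 2 + 2 cos θ > 0`), its transpose is `cos θ I - sin θ α^× + (1 - cos θ) ααᵀ`, and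
`e_q(R) = (sin θ / s) α`. Since `sin² θ = (1 - cos θ)(1 + cos θ)`, the rank-one term
`2 e_q e_qᵀ` equals `(1 - cos θ) ααᵀ`, which cancels the `ααᵀ` part of `-Rᵀ` and leaves
`(1 + cos θ) I + sin θ α^×`.
-/

open Matrix Polynomial Filter

noncomputable section

/-- The hat map `x ↦ x^×`: the unique skew-symmetric matrix with `x^× y = x × y`. -/
def hat (x : Fin 3 → ℝ) : Matrix (Fin 3) (Fin 3) ℝ :=
  !![0, -x 2, x 1; x 2, 0, -x 0; -x 1, x 0, 0]

/-- The vee map, inverse of the hat map: `(x^×)^∨ = x`. -/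
def vee (M : Matrix (Fin 3) (Fin 3) ℝ) : Fin 3 → ℝ :=
  ![M 2 1, M 0 2, M 1 0]

/-- `R ∈ SO(3)`: real 3×3 matrices with `RᵀR = I` and `det R = 1`. -/
def SO3 (R : Matrix (Fin 3) (Fin 3) ℝ) : Prop :=
  Rᵀ * R = 1 ∧ R.det = 1

/-- The chordal attitude error function `Ψ(R) = (1/2) tr(I - R)`. -/
def Psi (R : Matrix (Fin 3) (Fin 3) ℝ) : ℝ := (1 / 2) * (1 - R).trace

/-- The attitude error vector `e_R(R) = (1/2)(R - Rᵀ)^∨`. -/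
def eR (R : Matrix (Fin 3) (Fin 3) ℝ) : Fin 3 → ℝ := (1 / 2 : ℝ) • vee (R - Rᵀ)

/-- The map `E(M) = (1/2)(tr(M)·I - Mᵀ)`. -/
def Emap (M : Matrix (Fin 3) (Fin 3) ℝ) : Matrix (Fin 3) (Fin 3) ℝ :=
  (1 / 2 : ℝ) • (M.trace • (1 : Matrix (Fin 3) (Fin 3) ℝ) - Mᵀ)
/-- The attitude error function `Ψ_q(R) = 2 - √(1 + tr R)`. -/
def Psiq (R : Matrix (Fin 3) (Fin 3) ℝ) : ℝ := 2 - Real.sqrt (1 + R.trace)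

/-- The attitude error vector `e_q(R) = (1/(2√(1 + tr R)))(R - Rᵀ)^∨`. -/
def eq' (R : Matrix (Fin 3) (Fin 3) ℝ) : Fin 3 → ℝ :=
  (1 / (2 * Real.sqrt (1 + R.trace))) • vee (R - Rᵀ)

/-- The matrix `Ẽ(R) = (1/(2√(1 + tr R)))(tr(R)·I - Rᵀ + 2 e_q(R) e_q(R)ᵀ)` appearing in
the derivative of `e_q`. -/
def Etilde (R : Matrix (Fin 3) (Fin 3) ℝ) : Matrix (Fin 3) (Fin 3) ℝ :=
  (1 / (2 * Real.sqrt (1 + R.trace))) •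
    (R.trace • (1 : Matrix (Fin 3) (Fin 3) ℝ) - Rᵀ
      + (2 : ℝ) • Matrix.vecMulVec (eq' R) (eq' R))
/-- The matrix `E_q(α, θ) = (1/√(2 + 2cos θ))[(1 + cos θ)I + (sin θ)α^×]`. -/
def Eq' (α : Fin 3 → ℝ) (θ : ℝ) : Matrix (Fin 3) (Fin 3) ℝ :=
  (1 / Real.sqrt (2 + 2 * Real.cos θ)) •
    ((1 + Real.cos θ) • (1 : Matrix (Fin 3) (Fin 3) ℝ) + Real.sin θ • hat α)

lemma hat_mul_hat (α : Fin 3 → ℝ) (hα : α ⬝ᵥ α = 1) :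
    hat α * hat α = vecMulVec α α - 1 := by
  simp only [dotProduct, Fin.sum_univ_three] at hα
  ext i j
  fin_cases i <;> fin_cases j <;>
    simp [hat, vecMulVec_apply, Matrix.mul_apply, Fin.sum_univ_three] <;> linarith

lemma hat_transpose (α : Fin 3 → ℝ) : (hat α)ᵀ = -hat α := by
  ext i j
  fin_cases i <;> fin_cases j <;> simp [hat]

lemma hat_trace (α : Fin 3 → ℝ) : (hat α).trace = 0 := by
  simp [hat, Matrix.trace, Fin.sum_univ_three]

lemma vee_smul_hat (c : ℝ) (α : Fin 3 → ℝ) : vee (c • hat α) = c • α := by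
  ext i
  fin_cases i <;> simp [vee, hat]

/-- for the Rodrigues rotation `R` about a unit axis `α` with angle `θ`
(`cos θ ≠ -1`), one has
`(1/√(1 + tr R))(tr(R)·I - Rᵀ + 2 e_q(R) e_q(R)ᵀ) = E_q(α, θ)`. -/
theorem Eq_formula
    (α : Fin 3 → ℝ) (hα : α ⬝ᵥ α = 1) (θ : ℝ) (hθ : Real.cos θ ≠ -1)
    (R : Matrix (Fin 3) (Fin 3) ℝ)
    (hR : R = 1 + Real.sin θ • hat α + (1 - Real.cos θ) • (hat α * hat α)) :
    (1 / Real.sqrt (1 + R.trace)) •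
        (R.trace • (1 : Matrix (Fin 3) (Fin 3) ℝ) - Rᵀ
          + (2 : ℝ) • Matrix.vecMulVec (eq' R) (eq' R)) = Eq' α θ := by
  -- The Rodrigues formula with `α^× α^×` expanded.
  have hR2 : R = Real.cos θ • 1 + Real.sin θ • hat α + (1 - Real.cos θ) • vecMulVec α α := by
    rw [hR, hat_mul_hat α hα]
    module
  have hRT : Rᵀ = Real.cos θ • 1 - Real.sin θ • hat α + (1 - Real.cos θ) • vecMulVec α α := by
    rw [hR2]
    simp only [transpose_add, transpose_smul, transpose_one, hat_transpose, transpose_vecMulVec]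
    module
  have htr : 1 + R.trace = 2 + 2 * Real.cos θ := by
    rw [hR2]
    simp only [trace_add, trace_smul, trace_one, hat_trace, trace_vecMulVec, hα,
      Fintype.card_fin, smul_eq_mul]
    push_cast
    ring
  have hpos : 0 < 2 + 2 * Real.cos θ := by
    have := lt_of_le_of_ne (Real.neg_one_le_cos θ) hθ.symm
    linarith
  have hsq := Real.sq_sqrt hpos.le
  have hs : Real.sqrt (2 + 2 * Real.cos θ) ≠ 0 := (Real.sqrt_pos.2 hpos).ne'
  have he : eq' R = (Real.sin θ / Real.sqrt (2 + 2 * Real.cos θ)) • α := by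
    have hskew : R - Rᵀ = (2 * Real.sin θ) • hat α := by
      rw [hRT, hR2]
      module
    rw [eq', htr, hskew, vee_smul_hat, smul_smul]
    congr 1
    field_simp
  have hrank : (2 : ℝ) • vecMulVec (eq' R) (eq' R) = (1 - Real.cos θ) • vecMulVec α α := by
    rw [he, smul_vecMulVec, vecMulVec_smul, smul_smul, smul_smul]
    congr 1
    rw [mul_assoc, div_mul_div_comm, ← sq, ← sq, hsq, Real.sin_sq]
    rw [← mul_div_assoc, div_eq_iff hpos.ne']
    ring
  have htr2 : R.trace = 1 + 2 * Real.cos θ := by linarith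
  rw [Eq', htr, hrank, hRT, htr2]
  congr 1
  module
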